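/- arXiv:2504.20888 — 2 statements merged into one kernel-verified Lean document; each statement's English description precedes it below -/
import Mathlib

section
/- Let L, M, N be positive real numbers, let δ be a real number with 0 < δ ≤ 1, and let t be a positive integer satisfying t ≤ 1/δ < t + 1. Then M·(t·L − (t(t+1)/2)·δ·L) + N·δ·L ≥ (√(2MN) − M/2)·L. -/
/-!
Since `1 / δ` lies between `t` and `t + 1`, the product `(1 / δ - t) * (t + 1 - 1 / δ)` is
nonnegative. Multiplied by `δ / 2`, it is the difference between `t - t * (t + 1) / 2 * δ` and
`(1 / δ - 1) / 2`. The total download divided by `L` is therefore at least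
`M / (2 * δ) + N * δ - M / 2`, and the product of `M / (2 * δ)` and `N * δ` is `M * N / 2` for
every `δ`, so AM–GM bounds their sum below by a quantity independent of `δ`.
-/

theorem one_div_sub_one_div_two_le {K : Type*} [Field K] [LinearOrder K] [IsStrictOrderedRing K]
    {t δ : K} (hδ : 0 < δ) (ht : t ≤ 1 / δ) (ht' : 1 / δ ≤ t + 1) :
    (1 / δ - 1) / 2 ≤ t - t * (t + 1) / 2 * δ := by
  have gap_nonneg : 0 ≤ (1 / δ - t) * (t + 1 - 1 / δ) * (δ / 2) :=
    mul_nonneg (mul_nonneg (sub_nonneg.2 ht) (sub_nonneg.2 ht')) (half_pos hδ).le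
  have gap_eq : (1 / δ - t) * (t + 1 - 1 / δ) * (δ / 2) =
      t - t * (t + 1) / 2 * δ - (1 / δ - 1) / 2 := by
    field_simp
    ring
  exact sub_nonneg.1 (gap_eq ▸ gap_nonneg)

theorem sqrt_four_mul_le_add {a b : ℝ} (h : 0 ≤ a + b) : √(4 * a * b) ≤ a + b :=
  Real.sqrt_le_iff.2 ⟨h, four_mul_le_sq_add a b⟩

theorem sqrt_two_mul_mul_le_div_add_mul {a b δ : ℝ} (ha : 0 ≤ a) (hb : 0 ≤ b) (hδ : 0 < δ) :
    √(2 * a * b) ≤ a / (2 * δ) + b * δ := by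
  have product_eq : 2 * a * b = 4 * (a / (2 * δ)) * (b * δ) := by
    field_simp
    ring
  rw [product_eq]
  exact sqrt_four_mul_le_add (by positivity)

theorem stmt4_general {L M N δ t : ℝ} (hL : 0 ≤ L) (hM : 0 ≤ M) (hN : 0 ≤ N) (hδ : 0 < δ)
    (ht : t ≤ 1 / δ) (ht' : 1 / δ ≤ t + 1) :
    (√(2 * M * N) - M / 2) * L ≤ M * (t * L - t * (t + 1) / 2 * δ * L) + N * δ * L :=
  calc
    (√(2 * M * N) - M / 2) * L
    _ ≤ (M / (2 * δ) + N * δ - M / 2) * L := by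
      gcongr
      exact sqrt_two_mul_mul_le_div_add_mul hM hN hδ
    _ = (M * ((1 / δ - 1) / 2) + N * δ) * L := by
      field_simp
      ring
    _ ≤ (M * (t - t * (t + 1) / 2 * δ) + N * δ) * L := by
      gcongr
      exact one_div_sub_one_div_two_le hδ ht ht'
    _ = M * (t * L - t * (t + 1) / 2 * δ * L) + N * δ * L := by ring

theorem stmt4 (L M N δ : ℝ) (hL : 0 < L) (hM : 0 < M) (hN : 0 < N)
    (hδ0 : 0 < δ) (hδ1 : δ ≤ 1) (t : ℕ) (ht : 0 < t)
    (htδ : (t : ℝ) ≤ 1 / δ) (htδ' : 1 / δ < t + 1) :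
    (Real.sqrt (2 * M * N) - M / 2) * L ≤
      M * ((t : ℝ) * L - ((t : ℝ) * (t + 1) / 2) * δ * L) + N * δ * L :=
  stmt4_general hL.le hM.le hN.le hδ0 htδ htδ'.le
end

section
/- Let N be a positive integer and let f be a function assigning to each ordered pair (j, ℓ) of elements of {1,…,N} an element of 𝔽₂, with f symmetric: f(j,ℓ) = f(ℓ,j) for all j, ℓ. Let i, i' be distinct elements of {1,…,N} and let P ⊆ {1,…,N} satisfy i ∈ P and i' ∉ P. Then, in 𝔽₂, Σ_{ℓ ∈ ({i'} ∪ P) ∖ {i}} f(i,ℓ) + Σ_{j ∈ P∖{i}} Σ_{ℓ ∈ P∖{j}} f(j,ℓ) = f(i,i'). -/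
/-!
The term at `ℓ = i'` of the first sum is `f i i'`, and its other terms are exactly the missing row
`j = i` of the double sum. What remains runs over all ordered pairs of distinct elements of `P`,
where each unordered pair is counted once in each order, hence twice.
-/

section OffDiag

variable {α M : Type*} [DecidableEq α] [AddCommMonoid M]

theorem filter_offDiag_sym2Mk_eq_pair {s : Finset α} {a b : α} (ha : a ∈ s) (hb : b ∈ s)
    (hab : a ≠ b) : {p ∈ s.offDiag | s(p.1, p.2) = s(a, b)} = {(a, b), (b, a)} := by
  ext ⟨c, d⟩
  simp only [Finset.mem_filter, Finset.mem_offDiag, Finset.mem_insert, Finset.mem_singleton,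
    Sym2.eq_iff, Prod.mk.injEq, and_iff_right_iff_imp]
  rintro (⟨rfl, rfl⟩ | ⟨rfl, rfl⟩)
  · exact ⟨ha, hb, hab⟩
  · exact ⟨hb, ha, hab.symm⟩

theorem card_filter_offDiag_sym2Mk_eq_two {s : Finset α} {e : Sym2 α} (he : e ∈ s.sym2)
    (hdiag : ¬ e.IsDiag) : Finset.card {p ∈ s.offDiag | s(p.1, p.2) = e} = 2 := by
  induction e with
  | h a b =>
    obtain ⟨ha, hb⟩ := Finset.mk_mem_sym2_iff.mp he
    have hab : a ≠ b := fun h => hdiag (Sym2.mk_isDiag_iff.mpr h)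
    rw [filter_offDiag_sym2Mk_eq_pair ha hb hab]
    exact Finset.card_pair fun h => hab (congrArg Prod.fst h)

theorem sum_offDiag_sym2Mk_eq_two_nsmul (s : Finset α) (g : Sym2 α → M) :
    ∑ p ∈ s.offDiag, g s(p.1, p.2) = 2 • ∑ e ∈ s.sym2 with ¬ e.IsDiag, g e := by
  have maps_to : ∀ p ∈ s.offDiag, s(p.1, p.2) ∈ {e ∈ s.sym2 | ¬ e.IsDiag} := by
    intro p hp
    obtain ⟨h₁, h₂, -⟩ := Finset.mem_offDiag.mp hp
    exact Finset.mem_filter.mpr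
      ⟨Finset.mk_mem_sym2_iff.mpr ⟨h₁, h₂⟩, Finset.not_isDiag_mk_of_mem_offDiag hp⟩
  rw [← Finset.sum_fiberwise_of_maps_to' maps_to, Finset.smul_sum]
  refine Finset.sum_congr rfl fun e he => ?_
  obtain ⟨he, hdiag⟩ := Finset.mem_filter.mp he
  rw [Finset.sum_const, card_filter_offDiag_sym2Mk_eq_two he hdiag]

theorem sum_sum_erase_eq_sum_offDiag (s : Finset α) (f : α → α → M) :
    ∑ a ∈ s, ∑ b ∈ s.erase a, f a b = ∑ p ∈ s.offDiag, f p.1 p.2 := by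
  refine (Finset.sum_finset_product' _ _ _ fun p => ?_).symm
  rw [Finset.mem_offDiag, Finset.mem_erase, and_comm (a := p.2 ≠ p.1), ne_comm]

theorem stmt7_general (f : α → α → M) (hf : ∀ j ℓ, f j ℓ = f ℓ j) {i i' : α} {P : Finset α}
    (hiP : i ∈ P) (hi'P : i' ∉ P) :
    (∑ ℓ ∈ (insert i' P).erase i, f i ℓ) + ∑ j ∈ P.erase i, ∑ ℓ ∈ P.erase j, f j ℓ =
      f i i' + 2 • ∑ e ∈ P.sym2 with ¬ e.IsDiag, Sym2.lift ⟨f, hf⟩ e := by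
  have hii' : i' ≠ i := (ne_of_mem_of_not_mem hiP hi'P).symm
  have hi'_erase : i' ∉ P.erase i := fun h => hi'P (Finset.mem_of_mem_erase h)
  calc
    _ = f i i' + (∑ ℓ ∈ P.erase i, f i ℓ + ∑ j ∈ P.erase i, ∑ ℓ ∈ P.erase j, f j ℓ) := by
      rw [Finset.erase_insert_of_ne hii', Finset.sum_insert hi'_erase, add_assoc]
    _ = f i i' + ∑ j ∈ P, ∑ ℓ ∈ P.erase j, f j ℓ := by
      rw [Finset.add_sum_erase P (fun j => ∑ ℓ ∈ P.erase j, f j ℓ) hiP]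
    _ = f i i' + ∑ p ∈ P.offDiag, Sym2.lift ⟨f, hf⟩ s(p.1, p.2) := by
      simp only [sum_sum_erase_eq_sum_offDiag, Sym2.lift_mk]
    _ = _ := by rw [sum_offDiag_sym2Mk_eq_two_nsmul]

end OffDiag

theorem stmt7 (N : ℕ) (hN : 0 < N) (f : Fin N → Fin N → ZMod 2)
    (hf : ∀ j ℓ, f j ℓ = f ℓ j) (i i' : Fin N) (hii : i ≠ i')
    (P : Finset (Fin N)) (hiP : i ∈ P) (hi'P : i' ∉ P) :
    (∑ ℓ ∈ (insert i' P).erase i, f i ℓ) +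
        ∑ j ∈ P.erase i, ∑ ℓ ∈ P.erase j, f j ℓ = f i i' := by
  rw [stmt7_general f hf hiP hi'P, CharTwo.two_nsmul, add_zero]
end
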